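/- arXiv:1411.5282 — 4 statements merged into one kernel-verified Lean document; each statement's English description precedes it below -/
import Mathlib

section
/- If G satisfies Condition NC for parameters f and l, then for every F ⊆ V with |F| ≤ f and every admissible choice of the sets C_i, the associated reduced graph contains at least one vertex k that has a directed path in the reduced graph to every vertex of the reduced graph. -/
/-- `p` is a directed path (a nonempty list of distinct vertices, with consecutive vertices
joined by edges of `E`) from some vertex of `W` to `x`, with at most `l` edges. -/
def IsWxPath {V : Type} (E : V → V → Prop) (l : ℕ) (W : Finset V) (x : V)
    (p : List V) : Prop :=
  p.Chain' E ∧ p.Nodup ∧ (∃ w ∈ W, p.head? = some w) ∧ p.getLast? = some x ∧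
    p.length ≤ l + 1

/-- `S` is an `l`-restricted `(W,x)`-vertex cut for the edge relation `E`:
`x ∉ S` and every `(W,x)`-path of length at most `l` contains a vertex of `S`. -/
def IsCut {V : Type} (E : V → V → Prop) (l : ℕ) (W : Finset V) (x : V)
    (S : Finset V) : Prop :=
  x ∉ S ∧ ∀ p : List V, IsWxPath E l W x p → ∃ s ∈ S, s ∈ p

/-- `A ⇒_l B`: there is `i ∈ B` with `κ_l(A, i) ≥ f + 1`, i.e. every
`l`-restricted `(A,i)`-vertex cut has at least `f + 1` vertices. -/
def ArrowL {V : Type} (E : V → V → Prop) (f l : ℕ) (A B : Finset V) : Prop :=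
  ∃ i ∈ B, ∀ S : Finset V, IsCut E l A i S → f + 1 ≤ S.card

/-- Edge relation of the subgraph induced on the complement of `F`. -/
def inducedE {V : Type} (E : V → V → Prop) (F : Finset V) : V → V → Prop :=
  fun u v => u ∉ F ∧ v ∉ F ∧ E u v

/-- `L, C, R, F` form a partition of the vertex set into four pairwise disjoint sets. -/
def IsPartition4 {V : Type} [Fintype V] [DecidableEq V] (L C R F : Finset V) : Prop :=
  L ∪ C ∪ R ∪ F = Finset.univ ∧ Disjoint L C ∧ Disjoint L R ∧ Disjoint L F ∧
    Disjoint C R ∧ Disjoint C F ∧ Disjoint R F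

/-- Condition NC for parameters `f` and `l`: for every partition `L, C, R, F` of the
vertex set with `L, R` nonempty and `|F| ≤ f`, in the induced subgraph `G_F` either
`R ∪ C ⇒_l L` or `L ∪ C ⇒_l R`. -/
def CondNC {V : Type} [Fintype V] [DecidableEq V] (E : V → V → Prop) (f l : ℕ) : Prop :=
  ∀ L C R F : Finset V, IsPartition4 L C R F → L.Nonempty → R.Nonempty → F.card ≤ f →
    ArrowL (inducedE E F) f l (R ∪ C) L ∨ ArrowL (inducedE E F) f l (L ∪ C) R

/-- There is a directed path (nonempty list of distinct vertices) of length at most `l`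
from `u` to `i` in `E` all of whose vertices avoid the set `Avoid`. -/
def HasPathLe {V : Type} (E : V → V → Prop) (l : ℕ) (Avoid : Finset V) (u i : V) : Prop :=
  ∃ p : List V, p.Chain' E ∧ p.Nodup ∧ p.head? = some u ∧ p.getLast? = some i ∧
    p.length ≤ l + 1 ∧ ∀ v ∈ p, v ∉ Avoid

/-- Edge relation of the reduced graph associated with `F` and the choice `C`:
an edge `(u, i)` (both outside `F`) whenever there is a directed path of length at most `l`
from `u` to `i` in `G` whose vertices avoid `F ∪ C i`. -/
def reducedEdge {V : Type} [DecidableEq V] (E : V → V → Prop) (l : ℕ) (F : Finset V)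
    (C : V → Finset V) : V → V → Prop :=
  fun u i => u ∉ F ∧ i ∉ F ∧ HasPathLe E l (F ∪ C i) u i

/-- The choice `C` is admissible for `F`: for each `i ∉ F`, `C i ⊆ N_i^{l-} \ {i}`
and `|C i| ≤ f`. -/
def AdmissibleC {V : Type} (E : V → V → Prop) (l f : ℕ) (F : Finset V)
    (C : V → Finset V) : Prop :=
  ∀ i, i ∉ F → (C i).card ≤ f ∧ ∀ u ∈ C i, u ≠ i ∧ HasPathLe E l ∅ u i

/-- `K` is a source component of the directed graph with vertex set `VS` and edge relation
`Rel`: a strongly connected component no vertex outside of which has a directed path to it. -/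
def IsSourceComponent {V : Type} (Rel : V → V → Prop) (VS : Finset V) (K : Finset V) : Prop :=
  K.Nonempty ∧ K ⊆ VS ∧
    (∀ u ∈ K, ∀ v ∈ K, Relation.ReflTransGen Rel u v) ∧
    (∀ v ∈ VS, v ∉ K → ∀ u ∈ K, ¬ Relation.ReflTransGen Rel v u)

theorem aux_avoid {V : Type} (E : V → V → Prop) (F : Finset V) :
    ∀ (p : List V), p.IsChain (inducedE E F) → ∀ w, w ∉ F → p.head? = some w →
      ∀ v ∈ p, v ∉ F := by
  intro p
  induction p with
  | nil => intro _ w _ h; simp at h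
  | cons a t ih =>
    intro hc w hw hh v hv
    have haw : a = w := by simpa using hh
    subst haw
    cases t with
    | nil =>
      have : v = a := by simpa using hv
      rw [this]; exact hw
    | cons b t' =>
      rw [List.isChain_cons_cons] at hc
      rcases List.mem_cons.1 hv with h | h
      · rw [h]; exact hw
      · exact ih hc.2 b hc.1.2.1 rfl v h

theorem aux_noArrow {V : Type} [DecidableEq V] (E : V → V → Prop) (f l : ℕ) (F : Finset V)
    (C : V → Finset V) (hC : AdmissibleC E l f F C) (A B : Finset V)
    (hA : ∀ a ∈ A, a ∉ F) (hB : ∀ b ∈ B, b ∉ F)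
    (hAB : ∀ a ∈ A, ∀ b ∈ B, ¬ reducedEdge E l F C a b) :
    ¬ ArrowL (inducedE E F) f l A B := by
  rintro ⟨j, hj, hcut⟩
  have hadm := hC j (hB j hj)
  have h1 := hcut (C j) ⟨fun h => (hadm.2 j h).1 rfl, ?_⟩
  · have := hadm.1
    omega
  · rintro p ⟨hc, hnd, ⟨w, hw, hh⟩, hlast, hlen⟩
    by_contra hno
    push Not at hno
    refine hAB w hw j hj ⟨hA w hw, hB j hj, p, ?_, hnd, hh, hlast, hlen, ?_⟩
    · exact List.IsChain.imp (fun _ _ h => h.2.2) hc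
    · intro v hv hv2
      rcases Finset.mem_union.1 hv2 with h | h
      · exact aux_avoid E F p hc w (hA w hw) hh v hv h
      · exact hno v h hv

theorem aux_card {V : Type} [Fintype V] [DecidableEq V] (E : V → V → Prop)
    (hn : 2 ≤ Fintype.card V) (f l : ℕ) (hNC : CondNC E f l) : f < Fintype.card V := by
  have key : ∀ A B : Finset V, Disjoint A B → ArrowL (inducedE E ∅) f l A B →
      f < Fintype.card V := by
    rintro A B hd ⟨i, hi, h⟩
    have h1 := h A ⟨fun hh => Finset.disjoint_left.1 hd hh hi, ?_⟩
    · have := Finset.card_le_univ A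
      omega
    · rintro p ⟨-, -, ⟨w, hw, hh⟩, -⟩
      exact ⟨w, hw, List.mem_of_mem_head? hh⟩
  obtain ⟨a, b, hab⟩ := Fintype.exists_pair_of_one_lt_card (show 1 < Fintype.card V by omega)
  rcases hNC {a} ∅ {a}ᶜ ∅ (by simp [IsPartition4, disjoint_compl_right]) (by simp)
    ⟨b, by simpa using hab.symm⟩ (by simp) with h | h
  · exact key _ _ (by simp [disjoint_compl_left]) h
  · exact key _ _ (by simp) h

/-- If `G` satisfies Condition NC, then for every `F` with `|F| ≤ f` and every admissible
choice of the sets `C_i`, the associated reduced graph has a vertex `k` with a directed path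
(in the reduced graph) to every vertex of the reduced graph. -/
theorem stmt_4 {V : Type} [Fintype V] [DecidableEq V] (E : V → V → Prop)
    (hself : ∀ v, E v v) (hn : 2 ≤ Fintype.card V) (f l : ℕ) (hl : 1 ≤ l)
    (hNC : CondNC E f l) :
    ∀ F : Finset V, F.card ≤ f → ∀ C : V → Finset V, AdmissibleC E l f F C →
      ∃ k, k ∉ F ∧ ∀ i, i ∉ F →
        Relation.ReflTransGen (reducedEdge E l F C) k i := by
  classical
  intro F hF C hC
  set Rel := Relation.ReflTransGen (reducedEdge E l F C) with hRel
  let anc : V → Finset V := fun x => Finset.univ.filter (fun u => u ∉ F ∧ Rel u x)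
  have manc : ∀ u x, u ∈ anc x ↔ u ∉ F ∧ Rel u x := by intro u x; simp [anc]
  have hne : (Finset.univ.filter (fun u : V => u ∉ F)).Nonempty := by
    by_contra hcon
    have hall : ∀ u, u ∈ F := by
      intro u
      by_contra hu
      exact hcon ⟨u, by simpa using hu⟩
    have h1 : F = Finset.univ := Finset.eq_univ_iff_forall.2 hall
    have h2 := aux_card E hn f l hNC
    rw [h1, Finset.card_univ] at hF
    omega
  obtain ⟨k, hk, hmin⟩ := Finset.exists_min_image _ (fun x => (anc x).card) hne
  have hkF : k ∉ F := by simpa using hk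
  have hback : ∀ w, w ∉ F → Rel w k → Rel k w := by
    intro w hw hwk
    have hsub : anc w ⊆ anc k := by
      intro u hu
      rw [manc] at hu ⊢
      exact ⟨hu.1, hu.2.trans hwk⟩
    have heq := Finset.eq_of_subset_of_card_le hsub (hmin w (by simpa using hw))
    have : k ∈ anc w := by
      rw [heq, manc]; exact ⟨hkF, Relation.ReflTransGen.refl⟩
    exact ((manc _ _).1 this).2
  refine ⟨k, hkF, ?_⟩
  intro i hi
  by_contra hki
  have hdisj : Disjoint (anc k) (anc i) := by
    rw [Finset.disjoint_left]
    intro w h1 h2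
    rw [manc] at h1 h2
    exact hki ((hback w h1.1 h1.2).trans h2.2)
  have hclosed : ∀ x, ∀ a, a ∉ anc x → ∀ b ∈ anc x, ¬ reducedEdge E l F C a b := by
    intro x a ha b hb hab
    apply ha
    rw [manc] at hb ⊢
    exact ⟨hab.1, Relation.ReflTransGen.head hab hb.2⟩
  have hancF : ∀ x, ∀ a ∈ anc x, a ∉ F := fun x a ha => ((manc _ _).1 ha).1
  have hrestF : ∀ a ∈ (anc k ∪ anc i ∪ F)ᶜ, a ∉ anc k ∧ a ∉ anc i ∧ a ∉ F := by
    intro a ha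
    simp only [Finset.mem_compl, Finset.mem_union, not_or] at ha
    exact ⟨ha.1.1, ha.1.2, ha.2⟩
  have hpart : IsPartition4 (anc k) (anc k ∪ anc i ∪ F)ᶜ (anc i) F := by
    refine ⟨?_, ?_, hdisj, ?_, ?_, ?_, ?_⟩
    · ext a
      simp only [Finset.mem_compl, Finset.mem_union, Finset.mem_univ, iff_true]
      tauto
    · exact Finset.disjoint_left.2 fun a h1 h2 => (hrestF a h2).1 h1
    · exact Finset.disjoint_left.2 fun a h1 => hancF k a h1
    · exact Finset.disjoint_left.2 fun a h1 h2 => (hrestF a h1).2.1 h2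
    · exact Finset.disjoint_left.2 fun a h1 h2 => (hrestF a h1).2.2 h2
    · exact Finset.disjoint_left.2 fun a h1 => hancF i a h1
  rcases hNC _ _ _ F hpart ⟨k, (manc _ _).2 ⟨hkF, Relation.ReflTransGen.refl⟩⟩
    ⟨i, (manc _ _).2 ⟨hi, Relation.ReflTransGen.refl⟩⟩ hF with h | h
  · refine aux_noArrow E f l F C hC _ _ ?_ (hancF k) ?_ h
    · intro a ha
      rcases Finset.mem_union.1 ha with h | h
      · exact hancF i a h
      · exact (hrestF a h).2.2
    · intro a ha
      refine hclosed k a ?_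
      rcases Finset.mem_union.1 ha with h | h
      · exact fun h2 => Finset.disjoint_left.1 hdisj h2 h
      · exact (hrestF a h).1
  · refine aux_noArrow E f l F C hC _ _ ?_ (hancF i) ?_ h
    · intro a ha
      rcases Finset.mem_union.1 ha with h | h
      · exact hancF k a h
      · exact (hrestF a h).2.2
    · intro a ha
      refine hclosed i a ?_
      rcases Finset.mem_union.1 ha with h | h
      · exact fun h2 => Finset.disjoint_left.1 hdisj h h2
      · exact (hrestF a h).2.1
end

section
/- Suppose G satisfies Condition NC for parameters f and l. Let F ⊆ V with |F| = φ ≤ f, and consider any reduced graph associated with F and an admissible choice of the sets C_i. Then there exists a vertex k ∈ V \ F such that for every vertex i ∈ V \ F there is a directed walk of length exactly n − φ from k to i in the reduced graph; equivalently, letting H be the 0–1 adjacency matrix of the reduced graph (indexed by V \ F, with H_{u i} = 1 iff (u,i) is an edge of the reduced graph), the matrix power H^{n−φ} has a row k all of whose entries are positive. -/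
theorem aux_nonfull {V : Type} [Fintype V] [DecidableEq V] (E : V → V → Prop)
    (hn : 2 ≤ Fintype.card V) (f l : ℕ) (hNC : CondNC E f l) : f + 2 ≤ Fintype.card V := by
  obtain ⟨a, b, hab⟩ := Fintype.exists_pair_of_one_lt_card (α := V) (by omega)
  have key : ∀ (W : Finset V) (x : V), x ∉ W →
      IsCut (inducedE E ∅) l W x (Finset.univ.erase x) := by
    intro W x hx
    refine ⟨by simp, ?_⟩
    rintro p ⟨-, -, ⟨w, hw, hp⟩, -, -⟩
    refine ⟨w, ?_, List.mem_of_head? hp⟩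
    simp only [Finset.mem_erase, Finset.mem_univ, and_true]
    rintro rfl
    exact hx hw
  have hcard : ∀ x : V, (Finset.univ.erase x).card = Fintype.card V - 1 := by
    intro x
    rw [Finset.card_erase_of_mem (Finset.mem_univ x), Finset.card_univ]
  have := hNC {a} (Finset.univ \ {a, b}) {b} ∅ (by
    refine ⟨?_, ?_, ?_, ?_, ?_, ?_, ?_⟩
    · ext x
      simp
      tauto
    · simp
    · simpa using hab
    · simp
    · simp
    · simp
    · simp) (by simp) (by simp) (by simp)
  rcases this with ⟨i, hi, h⟩ | ⟨i, hi, h⟩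
  · rw [Finset.mem_singleton] at hi
    subst hi
    have := h _ (key _ _ (by simp [hab]))
    rw [hcard] at this
    omega
  · rw [Finset.mem_singleton] at hi
    subst hi
    have := h _ (key _ _ (by simp [hab.symm]))
    rw [hcard] at this
    omega

/-- Extract a reduced edge into `i` from the arrow relation. -/
theorem aux_edge {V : Type} [Fintype V] [DecidableEq V] (E : V → V → Prop) (f l : ℕ)
    (F : Finset V) (C : V → Finset V) (hC : AdmissibleC E l f F C) (A B : Finset V)
    (hAF : Disjoint A F) (hBF : Disjoint B F) (h : ArrowL (inducedE E F) f l A B) :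
    ∃ i ∈ B, ∃ w ∈ A, reducedEdge E l F C w i := by
  obtain ⟨i, hi, h⟩ := h
  have hiF : i ∉ F := Finset.disjoint_left.1 hBF hi
  refine ⟨i, hi, ?_⟩
  have hnc : ¬ IsCut (inducedE E F) l A i (C i) := by
    intro hc
    have h1 := h _ hc
    have h2 := (hC i hiF).1
    omega
  have hiC : i ∉ C i := fun hh => ((hC i hiF).2 i hh).1 rfl
  simp only [IsCut, not_and, not_forall, not_exists] at hnc
  obtain ⟨p, ⟨hch, hnd, ⟨w, hw, hp⟩, hlast, hlen⟩, hav⟩ := hnc hiC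
  have hwF : w ∉ F := Finset.disjoint_left.1 hAF hw
  refine ⟨w, hw, hwF, hiF, p, ?_, hnd, hp, hlast, hlen, ?_⟩
  · exact List.IsChain.imp (fun a b hab => hab.2.2) hch
  · intro v hv hvm
    rcases Finset.mem_union.1 hvm with hvF | hvC
    · have : ∀ (q : List V) (w : V), q.IsChain (inducedE E F) → q.head? = some w → w ∉ F →
          ∀ v ∈ q, v ∉ F := by
        intro q
        induction q with
        | nil => simp
        | cons a q ih =>
          intro w hq hh hwF v hv
          simp only [List.head?_cons, Option.some.injEq] at hh
          subst hh
          rcases List.mem_cons.1 hv with rfl | hv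
          · exact hwF
          · cases q with
            | nil => simp at hv
            | cons b q =>
              rw [List.isChain_cons_cons] at hq
              exact ih b hq.2 rfl hq.1.2.1 v hv
      exact this p w hch hp hwF v hv hvF
    · exact hav v hvC hv

theorem aux_pow {α : Type} [Fintype α] [DecidableEq α] (H : Matrix α α ℝ)
    (h0 : ∀ u i, 0 ≤ H u i) (hd : ∀ u, 0 < H u u) (k : α)
    (hk : ∀ i, Relation.ReflTransGen (fun u v => 0 < H u v) k i) :
    ∀ i, 0 < (H ^ (Fintype.card α)) k i := by
  classical
  have hnn : ∀ m : ℕ, ∀ i, 0 ≤ (H ^ m) k i := by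
    intro m
    induction m with
    | zero =>
      intro i
      rw [pow_zero, Matrix.one_apply]
      split_ifs <;> norm_num
    | succ m ih =>
      intro i
      rw [pow_succ, Matrix.mul_apply]
      exact Finset.sum_nonneg fun j _ => mul_nonneg (ih j) (h0 j i)
  have hstep : ∀ (m : ℕ) (j i : α), 0 < (H ^ m) k j → 0 < H j i → 0 < (H ^ (m + 1)) k i := by
    intro m j i hj hji
    rw [pow_succ, Matrix.mul_apply]
    exact Finset.sum_pos' (fun j _ => mul_nonneg (hnn m j) (h0 j i))
      ⟨j, Finset.mem_univ j, mul_pos hj hji⟩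
  have main : ∀ m : ℕ, 0 < (H ^ m) k k ∧ ((∀ i, 0 < (H ^ m) k i) ∨
      m + 1 ≤ (Finset.univ.filter fun i => 0 < (H ^ m) k i).card) := by
    intro m
    induction m with
    | zero =>
      refine ⟨by simp, Or.inr ?_⟩
      rw [zero_add, Nat.one_le_iff_ne_zero, Finset.card_ne_zero]
      exact ⟨k, by simp⟩
    | succ m ih =>
      obtain ⟨hkk, ih⟩ := ih
      refine ⟨hstep m k k hkk (hd k), ?_⟩
      rcases ih with ih | ih
      · exact Or.inl fun i => hstep m i i (ih i) (hd i)
      · by_cases hcl : ∀ j i, 0 < (H ^ m) k j → 0 < H j i → 0 < (H ^ m) k i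
        · left
          intro i
          refine hstep m i i ?_ (hd i)
          induction hk i with
          | refl => exact hkk
          | tail _ h2 ih2 => exact hcl _ _ ih2 h2
        · right
          push Not at hcl
          obtain ⟨j, i, hj, hji, hi⟩ := hcl
          refine lt_of_le_of_lt ih (Finset.card_lt_card ?_)
          rw [Finset.ssubset_iff_of_subset]
          · refine ⟨i, ?_, ?_⟩
            · simpa using hstep m j i hj hji
            · simpa using hi
          · intro x hx
            simp only [Finset.mem_filter, Finset.mem_univ, true_and] at hx ⊢
            exact hstep m x x hx (hd x)
  rcases (main (Fintype.card α)).2 with h | h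
  · exact h
  · have := Finset.card_le_univ (Finset.univ.filter fun i => 0 < (H ^ Fintype.card α) k i)
    omega

/-- If `G` satisfies Condition NC, `F ⊆ V` with `|F| = φ ≤ f`, and `H` is the 0–1 adjacency
matrix (indexed by `V \ F`) of a reduced graph associated with `F` and an admissible choice
of sets `C_i`, then `H ^ (n - φ)` has a row `k` all of whose entries are positive. -/
theorem stmt_5 {V : Type} [Fintype V] [DecidableEq V] (E : V → V → Prop)
    (hself : ∀ v, E v v) (hn : 2 ≤ Fintype.card V) (f l : ℕ) (hl : 1 ≤ l)
    (hNC : CondNC E f l)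
    (F : Finset V) (hF : F.card ≤ f) (C : V → Finset V) (hC : AdmissibleC E l f F C)
    (H : Matrix {v : V // v ∉ F} {v : V // v ∉ F} ℝ)
    (hH1 : ∀ u i : {v : V // v ∉ F}, reducedEdge E l F C u.1 i.1 → H u i = 1)
    (hH0 : ∀ u i : {v : V // v ∉ F}, ¬ reducedEdge E l F C u.1 i.1 → H u i = 0) :
    ∃ k : {v : V // v ∉ F}, ∀ i : {v : V // v ∉ F},
      0 < (H ^ (Fintype.card V - F.card)) k i := by
  classical
  have hcard := aux_nonfull E hn f l hNC
  have hdiag : ∀ v, v ∉ F → reducedEdge E l F C v v := by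
    intro v hv
    refine ⟨hv, hv, [v], ?_, by simp, by simp, by simp, by simp, ?_⟩
    · exact List.isChain_singleton v
    · intro w hw
      rw [List.mem_singleton] at hw
      subst hw
      rw [Finset.mem_union, not_or]
      exact ⟨hv, fun hh => ((hC w hv).2 w hh).1 rfl⟩
  let Rl : {v : V // v ∉ F} → {v : V // v ∉ F} → Prop :=
    fun u v => reducedEdge E l F C u.1 v.1
  -- any two vertices have a common ancestor
  have hcommon : ∀ a b : {v : V // v ∉ F}, ∃ c, Relation.ReflTransGen Rl c a ∧
      Relation.ReflTransGen Rl c b := by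
    intro a b
    by_contra hno
    push Not at hno
    let anc : {v : V // v ∉ F} → Finset V := fun a =>
      Finset.univ.filter fun v => ∃ hv : v ∉ F, Relation.ReflTransGen Rl ⟨v, hv⟩ a
    have hancF : ∀ a, Disjoint (anc a) F := by
      intro a
      rw [Finset.disjoint_left]
      intro v hv
      exact (Finset.mem_filter.1 hv).2.1
    have hself' : ∀ a, a.1 ∈ anc a := fun a =>
      Finset.mem_filter.2 ⟨Finset.mem_univ _, a.2, Relation.ReflTransGen.refl⟩
    have hclosed : ∀ (a) (i w : V), i ∈ anc a → reducedEdge E l F C w i → w ∈ anc a := by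
      intro a i w hi hwi
      obtain ⟨-, hiF, hia⟩ := Finset.mem_filter.1 hi
      exact Finset.mem_filter.2 ⟨Finset.mem_univ _, hwi.1,
        Relation.ReflTransGen.head (b := ⟨i, hiF⟩) hwi hia⟩
    have hdis : Disjoint (anc a) (anc b) := by
      rw [Finset.disjoint_left]
      intro v h1 h2
      obtain ⟨-, hv, h1⟩ := Finset.mem_filter.1 h1
      obtain ⟨-, hv', h2⟩ := Finset.mem_filter.1 h2
      exact hno _ h1 h2
    let M : Finset V := Finset.univ \ (anc a ∪ anc b ∪ F)
    have hMa : Disjoint (anc a) M := by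
      rw [Finset.disjoint_left]
      intro v h1 h2
      simp only [M, Finset.mem_sdiff, Finset.mem_union] at h2
      tauto
    have hMb : Disjoint (anc b) M := by
      rw [Finset.disjoint_left]
      intro v h1 h2
      simp only [M, Finset.mem_sdiff, Finset.mem_union] at h2
      tauto
    have hMF : Disjoint M F := by
      rw [Finset.disjoint_left]
      intro v h2 h1
      simp only [M, Finset.mem_sdiff, Finset.mem_union] at h2
      tauto
    have hpart : IsPartition4 (anc a) M (anc b) F := by
      refine ⟨?_, hMa, hdis, hancF a, hMb.symm, hMF, hancF b⟩
      ext v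
      simp only [M, Finset.mem_sdiff, Finset.mem_union, Finset.mem_univ, true_and, iff_true]
      tauto
    rcases hNC _ _ _ _ hpart ⟨_, hself' a⟩ ⟨_, hself' b⟩ hF with h | h
    · obtain ⟨i, hi, w, hw, hwi⟩ := aux_edge E f l F C hC _ _
        (Finset.disjoint_union_left.2 ⟨hancF b, hMF⟩) (hancF a) h
      have hwa := hclosed a i w hi hwi
      rcases Finset.mem_union.1 hw with hw | hw
      · exact Finset.disjoint_left.1 hdis hwa hw
      · exact Finset.disjoint_left.1 hMa hwa hw
    · obtain ⟨i, hi, w, hw, hwi⟩ := aux_edge E f l F C hC _ _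
        (Finset.disjoint_union_left.2 ⟨hancF a, hMF⟩) (hancF b) h
      have hwb := hclosed b i w hi hwi
      rcases Finset.mem_union.1 hw with hw | hw
      · exact Finset.disjoint_left.1 hdis hw hwb
      · exact Finset.disjoint_left.1 hMb hwb hw
  have hcardα : Fintype.card {v : V // v ∉ F} = Fintype.card V - F.card := by
    rw [Fintype.card_subtype_compl, Fintype.card_coe]
  have hne : Nonempty {v : V // v ∉ F} := by
    rw [← Fintype.card_pos_iff, hcardα]
    omega
  obtain ⟨v0⟩ := hne
  have hroot : ∀ s : Finset {v : V // v ∉ F}, ∃ c, ∀ i ∈ s, Relation.ReflTransGen Rl c i := by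
    intro s
    induction s using Finset.induction_on with
    | empty => exact ⟨v0, by simp⟩
    | insert a s _ ih =>
      obtain ⟨c, hc⟩ := ih
      obtain ⟨d, hda, hdc⟩ := hcommon a c
      refine ⟨d, fun i hi => ?_⟩
      rcases Finset.mem_insert.1 hi with rfl | hi
      · exact hda
      · exact hdc.trans (hc i hi)
  obtain ⟨k, hk⟩ := hroot Finset.univ
  have hpos : ∀ u i, Rl u i → 0 < H u i := by
    intro u i h
    rw [hH1 u i h]
    norm_num
  refine ⟨k, ?_⟩
  have hfin := aux_pow H (fun u i => by
      by_cases h : reducedEdge E l F C u.1 i.1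
      · rw [hH1 u i h]
        norm_num
      · rw [hH0 u i h])
    (fun u => hpos u u (hdiag u.1 u.2)) k
    (fun i => Relation.ReflTransGen.mono hpos _ _ (hk i (Finset.mem_univ i)))
  rw [hcardα] at hfin
  convert hfin
end

section
/- Suppose l ≥ n − 1 (so the length restriction on paths is vacuous). Then G satisfies Condition NC for parameters f and l if and only if G satisfies Condition 1 for parameter f. -/
/-- Condition 1 (for parameter `f`): for every partition `L, C, R, F` of the vertex set with
`L, R` nonempty and `|F| ≤ f`, either `L ∪ C` contains at least `f + 1` distinct in-neighbors
of `R`, or `R ∪ C` contains at least `f + 1` distinct in-neighbors of `L`. -/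
def Cond1 {V : Type} [Fintype V] [DecidableEq V] (E : V → V → Prop) [DecidableRel E]
    (f : ℕ) : Prop :=
  ∀ L C R F : Finset V, IsPartition4 L C R F → L.Nonempty → R.Nonempty → F.card ≤ f →
    f + 1 ≤ ((L ∪ C).filter (fun u => ∃ v ∈ R, E u v)).card ∨
    f + 1 ≤ ((R ∪ C).filter (fun u => ∃ v ∈ L, E u v)).card

lemma aux_path {V : Type} (r : V → V → Prop) (P : V → Prop) (i : V) (hi : P i)
    (hr : ∀ a b, r a b → P a) (u : V) (h : Relation.ReflTransGen r u i) :
    ∃ p : List V, p.IsChain r ∧ p.Nodup ∧ p.head? = some u ∧ p.getLast? = some i ∧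
      ∀ a ∈ p, P a := by
  classical
  induction h using Relation.ReflTransGen.head_induction_on with
  | refl => exact ⟨[i], by simp, by simp, by simp, by simp, by simpa using hi⟩
  | @head a b hab _ ih =>
    obtain ⟨p, h1, h2, h3, h4, h5⟩ := ih
    by_cases ha : a ∈ p
    · obtain ⟨s, t, rfl⟩ := List.append_of_mem ha
      refine ⟨a :: t, ?_, ?_, by simp, ?_, ?_⟩
      · exact (List.isChain_append.1 h1).2.1
      · exact (List.nodup_append.1 h2).2.1
      · simpa [List.getLast?_append] using h4
      · intro x hx
        exact h5 x (List.mem_append_right _ hx)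
    · cases p with
      | nil => simp at h3
      | cons c t =>
        simp only [List.head?_cons, Option.some.injEq] at h3
        subst h3
        refine ⟨a :: c :: t, ?_, ?_, by simp, ?_, ?_⟩
        · exact List.isChain_cons_cons.2 ⟨hab, h1⟩
        · exact List.nodup_cons.2 ⟨ha, h2⟩
        · simpa using h4
        · intro x hx
          rcases List.mem_cons.1 hx with rfl | hx
          · exact hr _ _ hab
          · exact h5 x hx

lemma aux_cross {V : Type} (r : V → V → Prop) (L : Finset V) (x : V) (hx : x ∈ L) :
    ∀ (p : List V) (w : V), w ∉ L → p.IsChain r → p.head? = some w → p.getLast? = some x →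
      ∃ u ∈ p, ∃ v ∈ L, u ∉ L ∧ r u v := by
  intro p
  induction p with
  | nil => intro w _ _ h; simp at h
  | cons a t ih =>
    intro w hw hc hh hl
    simp only [List.head?_cons, Option.some.injEq] at hh
    subst hh
    cases t with
    | nil =>
      simp only [List.getLast?_singleton, Option.some.injEq] at hl
      subst hl
      exact absurd hx hw
    | cons b t =>
      obtain ⟨hab, hc⟩ := List.isChain_cons_cons.1 hc
      by_cases hb : b ∈ L
      · exact ⟨a, by simp, b, hb, hw, hab⟩
      · obtain ⟨u, hu, v, hv, h⟩ := ih b hb hc (by simp) (by simpa using hl)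
        exact ⟨u, List.mem_cons_of_mem _ hu, v, hv, h⟩

/-- An arrow forces many in-neighbours. -/
lemma aux_arrow {V : Type} [Fintype V] [DecidableEq V] (E : V → V → Prop) [DecidableRel E]
    (f l : ℕ) (L A F : Finset V) (hcov : ∀ v, v ∈ L ∨ v ∈ A ∨ v ∈ F) (hLA : Disjoint L A)
    (h : ArrowL (inducedE E F) f l A L) :
    f + 1 ≤ (A.filter (fun u => ∃ v ∈ L, E u v)).card := by
  obtain ⟨i, hi, h⟩ := h
  apply h
  refine ⟨fun hh => Finset.disjoint_left.1 hLA hi (Finset.mem_filter.1 hh).1, ?_⟩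
  rintro p ⟨h1, -, ⟨w, hw, h3⟩, h4, -⟩
  obtain ⟨u, hu, v, hv, huL, huF, -, he⟩ :=
    aux_cross _ L i hi p w (fun hh => Finset.disjoint_left.1 hLA hh hw) h1 h3 h4
  refine ⟨u, Finset.mem_filter.2 ⟨?_, v, hv, he⟩, hu⟩
  have := hcov u
  tauto

/-- A failing arrow gives a subset with few in-neighbours. -/
lemma aux_noarrow {V : Type} [Fintype V] [DecidableEq V] (E : V → V → Prop)
    (f l : ℕ) (hl' : Fintype.card V - 1 ≤ l)
    (L A F : Finset V) (hcov : ∀ v, v ∈ L ∨ v ∈ A ∨ v ∈ F) (hLF : Disjoint L F)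
    (hne : L.Nonempty)
    (h : ¬ ArrowL (inducedE E F) f l A L) :
    ∃ L' ⊆ L, L'.Nonempty ∧ ∃ S : Finset V, S.card ≤ f ∧
      ∀ u v, u ∉ F → u ∉ L' → v ∈ L' → E u v → u ∈ S := by
  classical
  obtain ⟨i, hi⟩ := hne
  unfold ArrowL at h
  push Not at h
  obtain ⟨S, ⟨hiS, hcut⟩, hS⟩ := h i hi
  have hiF : i ∉ F := Finset.disjoint_left.1 hLF hi
  let r : V → V → Prop := fun a b => inducedE E F a b ∧ a ∉ S
  have hP : ∀ u, Relation.ReflTransGen r u i → u ∉ F ∧ u ∉ S := by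
    intro u hu
    rcases Relation.ReflTransGen.cases_head hu with rfl | ⟨c, hc, -⟩
    · exact ⟨hiF, hiS⟩
    · exact ⟨hc.1.1, hc.2⟩
  refine ⟨Finset.univ.filter (fun u => Relation.ReflTransGen r u i), ?_, ⟨i, ?_⟩, S,
    by omega, ?_⟩
  · intro u hu
    have hu := (Finset.mem_filter.1 hu).2
    have huA : u ∉ A := by
      intro huA
      obtain ⟨p, h1, h2, h3, h4, h5⟩ :=
        aux_path r (fun a => a ∉ S) i hiS (fun a b hab => hab.2) u hu
      have hlen := h2.length_le_card
      obtain ⟨s, hs, hsp⟩ := hcut p ⟨h1.imp (fun a b hab => hab.1), h2, ⟨u, huA, h3⟩, h4,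
        by omega⟩
      exact h5 s hsp hs
    have := hcov u
    have := (hP u hu).1
    tauto
  · exact Finset.mem_filter.2 ⟨Finset.mem_univ _, .refl⟩
  · intro u v huF huL hv he
    by_contra huS
    have hv := (Finset.mem_filter.1 hv).2
    exact huL (Finset.mem_filter.2 ⟨Finset.mem_univ _,
      .head ⟨⟨huF, (hP v hv).1, he⟩, huS⟩ hv⟩)

/-- When `l ≥ n - 1`, Condition NC (for `f, l`) is equivalent to Condition 1 (for `f`). -/
theorem stmt_9 {V : Type} [Fintype V] [DecidableEq V] (E : V → V → Prop) [DecidableRel E]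
    (hself : ∀ v, E v v) (hn : 2 ≤ Fintype.card V) (f l : ℕ) (hl : 1 ≤ l)
    (hl' : Fintype.card V - 1 ≤ l) :
    CondNC E f l ↔ Cond1 E f := by
  constructor
  · intro h L C R F hp hL hR hF
    have hcov : ∀ v, ((v ∈ L ∨ v ∈ C) ∨ v ∈ R) ∨ v ∈ F := fun v => by
      have := Finset.mem_univ v
      rw [← hp.1] at this
      simpa only [Finset.mem_union] using this
    obtain ⟨-, hLC, hLR, hLF, hCR, hCF, hRF⟩ := id hp
    rcases h L C R F hp hL hR hF with h | h
    · right
      refine aux_arrow E f l L _ F (fun v => ?_) (Finset.disjoint_union_right.2 ⟨hLR, hLC⟩) h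
      have := hcov v
      rw [Finset.mem_union]
      tauto
    · left
      refine aux_arrow E f l R _ F (fun v => ?_)
        (Finset.disjoint_union_right.2 ⟨hLR.symm, hCR.symm⟩) h
      have := hcov v
      rw [Finset.mem_union]
      tauto
  · intro h L C R F hp hL hR hF
    have hcov : ∀ v, ((v ∈ L ∨ v ∈ C) ∨ v ∈ R) ∨ v ∈ F := fun v => by
      have := Finset.mem_univ v
      rw [← hp.1] at this
      simpa only [Finset.mem_union] using this
    obtain ⟨-, hLC, hLR, hLF, hCR, hCF, hRF⟩ := id hp
    by_contra hcon
    rw [not_or] at hcon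
    obtain ⟨L', hL', hL'n, S, hS, hSc⟩ := aux_noarrow E f l hl' L (R ∪ C) F (fun v => by
      have := hcov v
      rw [Finset.mem_union]
      tauto) hLF hL hcon.1
    obtain ⟨R', hR', hR'n, T, hT, hTc⟩ := aux_noarrow E f l hl' R (L ∪ C) F (fun v => by
      have := hcov v
      rw [Finset.mem_union]
      tauto) hRF hR hcon.2
    have d1 : Disjoint L' R' := Finset.disjoint_of_subset_left hL'
      (Finset.disjoint_of_subset_right hR' hLR)
    have d2 : Disjoint L' F := Finset.disjoint_of_subset_left hL' hLF
    have d3 : Disjoint R' F := Finset.disjoint_of_subset_left hR' hRF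
    rw [Finset.disjoint_left] at d1 d2 d3
    have key := h L' (Finset.univ \ (L' ∪ R' ∪ F)) R' F (by
      refine ⟨?_, ?_, Finset.disjoint_left.2 d1, Finset.disjoint_left.2 d2, ?_, ?_,
        Finset.disjoint_left.2 d3⟩
      · ext v
        simp only [Finset.mem_union, Finset.mem_sdiff, Finset.mem_univ, true_and, iff_true]
        tauto
      all_goals
        rw [Finset.disjoint_left]
        intro v
        simp only [Finset.mem_union, Finset.mem_sdiff, Finset.mem_univ, true_and]
        tauto) hL'n hR'n hF
    rcases key with key | key
    · refine absurd (key.trans (Finset.card_le_card (t := T) ?_)) (by omega)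
      intro u hu
      obtain ⟨hu, v, hv, he⟩ := Finset.mem_filter.1 hu
      simp only [Finset.mem_union, Finset.mem_sdiff, Finset.mem_univ, true_and] at hu
      have a := @d1 u
      have b := @d2 u
      exact hTc u v (by tauto) (by tauto) hv he
    · refine absurd (key.trans (Finset.card_le_card (t := S) ?_)) (by omega)
      intro u hu
      obtain ⟨hu, v, hv, he⟩ := Finset.mem_filter.1 hu
      simp only [Finset.mem_union, Finset.mem_sdiff, Finset.mem_univ, true_and] at hu
      have a := @d1 u
      have b := @d3 u
      exact hSc u v (by tauto) (by tauto) hv he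
end

section
/- Let (M_t)_{t≥1} be a sequence of N×N row-stochastic matrices and suppose there exist γ with 0 < γ ≤ 1 and an integer L ≥ 1 such that for every k ≥ 0 the block product P_k = M_{(k+1)L} M_{(k+1)L−1} ⋯ M_{kL+1} satisfies λ(P_k) ≤ 1 − γ. Then for every vector v ∈ ℝ^N, setting v^{(T)} = M_T M_{T−1} ⋯ M_1 v: (i) every coordinate of every v^{(T)} lies in the interval [min_i v_i, max_i v_i]; and (ii) there exists a constant c ∈ ℝ such that v^{(T)} converges, as T → ∞, to the vector all of whose coordinates equal c. -/
/-- An `N × N` real matrix is row stochastic if its entries are nonnegative and each of its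
rows sums to 1. -/
def RowStochastic {N : ℕ} (Q : Matrix (Fin N) (Fin N) ℝ) : Prop :=
  (∀ r c, 0 ≤ Q r c) ∧ ∀ r, ∑ c, Q r c = 1

/-- The coefficient of ergodicity `λ(Q) = 1 - min_{i₁,i₂} ∑_j min (Q i₁ j) (Q i₂ j)`. -/
noncomputable def ergLam {N : ℕ} (Q : Matrix (Fin N) (Fin N) ℝ) : ℝ :=
  1 - ⨅ p : Fin N × Fin N, ∑ j, min (Q p.1 j) (Q p.2 j)

/-- `δ(Q) = max_j max_{i₁,i₂} |Q i₁ j - Q i₂ j|`. -/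
noncomputable def ergDel {N : ℕ} (Q : Matrix (Fin N) (Fin N) ℝ) : ℝ :=
  ⨆ p : (Fin N × Fin N) × Fin N, |Q p.1.1 p.2 - Q p.1.2 p.2|

/-- The backward product `M_T * M_{T-1} * ⋯ * M_1` (and the identity for `T = 0`). -/
noncomputable def backProd {N : ℕ} (M : ℕ → Matrix (Fin N) (Fin N) ℝ) :
    ℕ → Matrix (Fin N) (Fin N) ℝ
  | 0 => 1
  | T + 1 => M (T + 1) * backProd M T

/-- The block product `P_k = M_{(k+1)L} * M_{(k+1)L - 1} * ⋯ * M_{kL+1}`. -/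
noncomputable def blockProd {N : ℕ} (M : ℕ → Matrix (Fin N) (Fin N) ℝ) (L k : ℕ) :
    Matrix (Fin N) (Fin N) ℝ :=
  ((List.range L).map fun s => M ((k + 1) * L - s)).prod

theorem rs_mul {N : ℕ} {P Q : Matrix (Fin N) (Fin N) ℝ} (hP : RowStochastic P)
    (hQ : RowStochastic Q) : RowStochastic (P * Q) := by
  refine ⟨fun r c => ?_, fun r => ?_⟩
  · rw [Matrix.mul_apply]
    exact Finset.sum_nonneg fun j _ => mul_nonneg (hP.1 r j) (hQ.1 j c)
  · simp only [Matrix.mul_apply]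
    rw [Finset.sum_comm]
    simp only [← Finset.mul_sum, hQ.2, mul_one, hP.2]

theorem rs_one {N : ℕ} : RowStochastic (1 : Matrix (Fin N) (Fin N) ℝ) := by
  refine ⟨fun r c => ?_, fun r => ?_⟩
  · rw [Matrix.one_apply]; split_ifs <;> norm_num
  · simp [Matrix.one_apply]

theorem rs_list {N : ℕ} (l : List (Matrix (Fin N) (Fin N) ℝ))
    (h : ∀ P ∈ l, RowStochastic P) : RowStochastic l.prod := by
  induction l with
  | nil => simpa using rs_one
  | cons a l ih =>
    rw [List.prod_cons]
    exact rs_mul (h a (by simp)) (ih fun P hP => h P (by simp [hP]))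

theorem rs_bounds {N : ℕ} {Q : Matrix (Fin N) (Fin N) ℝ} (hQ : RowStochastic Q)
    (w : Fin N → ℝ) (i : Fin N) :
    (⨅ j, w j) ≤ Q.mulVec w i ∧ Q.mulVec w i ≤ ⨆ j, w j := by
  have e : ∀ x : ℝ, x = ∑ j, Q i j * x := fun x => by
    rw [← Finset.sum_mul, hQ.2, one_mul]
  simp only [Matrix.mulVec, dotProduct]
  constructor
  · rw [e (⨅ j, w j)]
    exact Finset.sum_le_sum fun j _ => mul_le_mul_of_nonneg_left
      (ciInf_le (Set.finite_range w).bddBelow j) (hQ.1 i j)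
  · rw [e (⨆ j, w j)]
    exact Finset.sum_le_sum fun j _ => mul_le_mul_of_nonneg_left
      (le_ciSup (Set.finite_range w).bddAbove j) (hQ.1 i j)

theorem rs_contract {N : ℕ} [Nonempty (Fin N)] {Q : Matrix (Fin N) (Fin N) ℝ}
    (hQ : RowStochastic Q) {γ : ℝ} (h : ergLam Q ≤ 1 - γ) (w : Fin N → ℝ) :
    (⨆ j, Q.mulVec w j) - (⨅ j, Q.mulVec w j) ≤ (1 - γ) * ((⨆ j, w j) - ⨅ j, w j) := by
  have key : ∀ i i', Q.mulVec w i - Q.mulVec w i' ≤ (1 - γ) * ((⨆ j, w j) - ⨅ j, w j) := by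
    intro i i'
    have hs : γ ≤ ∑ j, min (Q i j) (Q i' j) := by
      have := ciInf_le (Set.finite_range
        fun p : Fin N × Fin N => ∑ j, min (Q p.1 j) (Q p.2 j)).bddBelow (i, i')
      unfold ergLam at h
      simp only at this
      linarith
    have hlo : ∀ j, (⨅ j, w j) ≤ w j := fun j => ciInf_le (Set.finite_range w).bddBelow j
    have hhi : ∀ j, w j ≤ ⨆ j, w j := fun j => le_ciSup (Set.finite_range w).bddAbove j
    have hD : (⨅ j, w j) ≤ ⨆ j, w j := (hlo i).trans (hhi i)
    generalize (⨅ j, w j) = lo at *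
    generalize (⨆ j, w j) = hi at *
    have h1 : Q.mulVec w i - Q.mulVec w i' ≤
        ∑ j, ((Q i j - min (Q i j) (Q i' j)) * hi - (Q i' j - min (Q i j) (Q i' j)) * lo) := by
      simp only [Matrix.mulVec, dotProduct]
      rw [← Finset.sum_sub_distrib]
      refine Finset.sum_le_sum fun j _ => ?_
      have a1 := mul_le_mul_of_nonneg_left (hhi j)
        (sub_nonneg.2 (min_le_left (Q i j) (Q i' j)))
      have a2 := mul_le_mul_of_nonneg_left (hlo j)
        (sub_nonneg.2 (min_le_right (Q i j) (Q i' j)))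
      linarith
    rw [Finset.sum_sub_distrib, ← Finset.sum_mul, ← Finset.sum_mul, Finset.sum_sub_distrib,
      Finset.sum_sub_distrib, hQ.2, hQ.2] at h1
    nlinarith [mul_le_mul_of_nonneg_right hs (sub_nonneg.2 hD)]
  rw [sub_le_iff_le_add]
  refine ciSup_le fun i => ?_
  rw [← sub_le_iff_le_add']
  refine le_ciInf fun i' => ?_
  linarith [key i i']

theorem back_block {N : ℕ} (M : ℕ → Matrix (Fin N) (Fin N) ℝ) (m n : ℕ) :
    backProd M (m + n) = ((List.range n).map fun s => M (m + n - s)).prod * backProd M m := by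
  induction n with
  | zero => simp
  | succ n ih =>
    rw [List.range_succ_eq_map, List.map_cons, List.prod_cons, List.map_map, ← add_assoc,
      backProd, ih, Matrix.mul_assoc]
    congr 3
    refine List.map_congr_left fun s _ => ?_
    simp only [Function.comp]
    congr 1
    omega

/-- Under the block-contraction hypothesis of the convergence theorem, for every vector
`v ∈ ℝ^N` the iterates `v^{(T)} = M_T ⋯ M_1 v` stay in `[min_i v_i, max_i v_i]` and
converge to a constant vector `c • 1`. -/
theorem stmt_16 (N : ℕ) (M : ℕ → Matrix (Fin N) (Fin N) ℝ)
    (hM : ∀ t, 1 ≤ t → RowStochastic (M t))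
    (γ : ℝ) (hγ0 : 0 < γ) (hγ1 : γ ≤ 1) (L : ℕ) (hL : 1 ≤ L)
    (hblock : ∀ k : ℕ, ergLam (blockProd M L k) ≤ 1 - γ)
    (v : Fin N → ℝ) :
    (∀ T : ℕ, ∀ i : Fin N,
        (⨅ j, v j) ≤ (backProd M T).mulVec v i ∧ (backProd M T).mulVec v i ≤ ⨆ j, v j) ∧
      ∃ c : ℝ, Filter.Tendsto (fun T => (backProd M T).mulVec v) Filter.atTop
        (nhds fun _ => c) := by
  have hback : ∀ T, RowStochastic (backProd M T) := by
    intro T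
    induction T with
    | zero => exact rs_one
    | succ T ih => exact rs_mul (hM _ (by omega)) ih
  refine ⟨fun T i => rs_bounds (hback T) v i, ?_⟩
  rcases isEmpty_or_nonempty (Fin N) with hN | hN
  · refine ⟨0, ?_⟩
    rw [tendsto_pi_nhds]
    exact fun i => hN.elim i
  set u : ℕ → Fin N → ℝ := fun T => (backProd M T).mulVec v with hu
  have hstep : ∀ T, u (T + 1) = (M (T + 1)).mulVec (u T) := fun T => by
    simp only [hu, backProd, Matrix.mulVec_mulVec]
  have hlo : ∀ T j, (⨅ j, u T j) ≤ u T j :=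
    fun T j => ciInf_le (Set.finite_range (u T)).bddBelow j
  have hhi : ∀ T j, u T j ≤ ⨆ j, u T j :=
    fun T j => le_ciSup (Set.finite_range (u T)).bddAbove j
  let a : ℕ → ℝ := fun T => ⨅ j, u T j
  let b : ℕ → ℝ := fun T => ⨆ j, u T j
  have ha : Monotone a := monotone_nat_of_le_succ fun T => by
    refine le_ciInf fun i => ?_
    rw [hstep]
    exact (rs_bounds (hM (T + 1) (by omega)) (u T) i).1
  have hb : Antitone b := antitone_nat_of_succ_le fun T => by
    refine ciSup_le fun i => ?_
    rw [hstep]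
    exact (rs_bounds (hM (T + 1) (by omega)) (u T) i).2
  have hab : ∀ T, a T ≤ b T := fun T => (hlo T (Classical.arbitrary _)).trans (hhi T _)
  have ta := tendsto_atTop_ciSup ha
    ⟨b 0, by rintro _ ⟨T, rfl⟩; exact (hab T).trans (hb (Nat.zero_le T))⟩
  have tb := tendsto_atTop_ciInf hb
    ⟨a 0, by rintro _ ⟨T, rfl⟩; exact (ha (Nat.zero_le T)).trans (hab T)⟩
  have hcon : ∀ k, b (k * L) - a (k * L) ≤ (1 - γ) ^ k * (b 0 - a 0) := by
    intro k
    induction k with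
    | zero => simp
    | succ k ih =>
      have hP : RowStochastic (blockProd M L k) := by
        refine rs_list _ fun P hP => ?_
        obtain ⟨s, hs, rfl⟩ := List.mem_map.1 hP
        have hs' := List.mem_range.1 hs
        refine hM _ ?_
        rw [add_mul, one_mul]
        omega
      have e : u ((k + 1) * L) = (blockProd M L k).mulVec (u (k * L)) := by
        simp only [hu, blockProd, Matrix.mulVec_mulVec]
        rw [add_mul, one_mul, back_block]
      have h1 := rs_contract hP (hblock k) (u (k * L))
      rw [← e] at h1
      refine h1.trans ?_
      rw [pow_succ', mul_assoc]
      exact mul_le_mul_of_nonneg_left ih (by linarith)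
  have hsub : Filter.Tendsto (fun k : ℕ => k * L) Filter.atTop Filter.atTop :=
    Filter.tendsto_id.atTop_mul_const' (by omega)
  have t1 := (tb.comp hsub).sub (ta.comp hsub)
  have t0 : Filter.Tendsto (fun k : ℕ => (1 - γ) ^ k * (b 0 - a 0)) Filter.atTop (nhds 0) := by
    simpa using (tendsto_pow_atTop_nhds_zero_of_lt_one (by linarith : (0 : ℝ) ≤ 1 - γ)
      (by linarith)).mul_const (b 0 - a 0)
  have t2 := squeeze_zero (fun k => sub_nonneg.2 (hab (k * L))) hcon t0
  have heq := tendsto_nhds_unique t1 t2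
  rw [sub_eq_zero.1 heq] at tb
  refine ⟨⨆ i, a i, tendsto_pi_nhds.2 fun i => ?_⟩
  exact tendsto_of_tendsto_of_tendsto_of_le_of_le ta tb (fun T => hlo T i) (fun T => hhi T i)
end
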